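/- Let X be a complex vector space and 𝔔 a Hermitian form on X. Let V ⊆ X be a subspace with dim X/V < ∞ such that V^{𝔔𝔔} = V and V^𝔔 ⊆ V, and assume m⁻(𝔔|_V) is finite. Then m⁻(𝔔) − m⁻(𝔔|_V) = dim(V^𝔔/ker 𝔔). -/

import Mathlib

open Module Submodule

noncomputable section

variable {X : Type*} [AddCommGroup X] [Module ℂ X]

/-- The `Q`-orthogonal complement (polar) `V^𝔔` of a subspace `V` with respect to a
sesquilinear form `Q` (conjugate-linear in the first variable). -/
def qPolar (Q : X →ₗ⋆[ℂ] X →ₗ[ℂ] ℂ) (V : Submodule ℂ X) : Submodule ℂ X where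
  carrier := {x | ∀ v ∈ V, Q x v = 0}
  add_mem' := by
    intro a b ha hb v hv
    simp only [map_add, LinearMap.add_apply, ha v hv, hb v hv, add_zero]
  zero_mem' := by
    intro v hv
    simp
  smul_mem' := by
    intro c x hx v hv
    simp only [LinearMap.map_smulₛₗ, LinearMap.smul_apply, hx v hv, smul_zero]

/-- The kernel of the form `Q`, i.e. `X^𝔔`. -/
def qKer (Q : X →ₗ⋆[ℂ] X →ₗ[ℂ] ℂ) : Submodule ℂ X := qPolar Q ⊤

/-- The Morse index `m⁻(𝔔|_V)`: the supremum of dimensions of subspaces of `V`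
on which `Q` is negative definite, as an extended natural number. -/
def negIdx (Q : X →ₗ⋆[ℂ] X →ₗ[ℂ] ℂ) (V : Submodule ℂ X) : ℕ∞ :=
  sSup {k : ℕ∞ | ∃ W : Submodule ℂ X, W ≤ V ∧ FiniteDimensional ℂ W ∧
    (∀ x ∈ W, x ≠ 0 → (Q x x).re < 0) ∧ k = (Module.finrank ℂ W : ℕ∞)}

/-!
Lower bound: let `W ≤ V` be negative definite and let `N ≤ V ⊓ V^𝔔` be finite-dimensional with
`N ⊓ ker 𝔔 = 0`. Then `W ⊔ N` still meets `ker 𝔔` trivially, so a basis `y` of `N` has a dual family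
`e` (`𝔔 (e i) (y j) = δᵢⱼ`) orthogonal to `W`. As `N` is isotropic, subtracting from `e` suitable
elements of `N` turns its Gram matrix into `-1`; the resulting family spans, together with `W`, a
negative definite space of dimension `dim W + dim N`.

Upper bound: modulo `ker 𝔔`, a space of dimension `n` imposes only `n` linear conditions on the
vectors orthogonal to it, and the vectors orthogonal to `V^𝔔` are exactly those of `V`.
-/

section LinearAlgebra

variable {K E F : Type*} [Field K] [AddCommGroup E] [Module K E] [AddCommGroup F] [Module K F]

lemma exists_le_disjoint_ker_map_eq (f : E →ₗ[K] F) {N : Submodule K E} {S : Submodule K F}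
    (hS : S ≤ N.map f) : ∃ M ≤ N, Disjoint M f.ker ∧ M.map f = S := by
  obtain ⟨M, hdisj, hsup⟩ := IsModularLattice.exists_disjoint_and_sup_eq
    (inf_le_inf_left N (LinearMap.ker_le_comap f (p := S)))
  have hM : M ≤ N ⊓ S.comap f := hsup ▸ le_sup_right
  refine ⟨M, hM.trans inf_le_left, ?_, le_antisymm ?_ ?_⟩
  · rw [disjoint_iff_inf_le] at hdisj ⊢
    exact fun x ⟨hx, hker⟩ ↦ hdisj ⟨⟨(hM hx).1, hker⟩, hx⟩
  · exact map_le_iff_le_comap.2 (hM.trans inf_le_right)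
  · intro s hs
    obtain ⟨x, hx, rfl⟩ := hS hs
    obtain ⟨k, hk, m, hm, rfl⟩ := mem_sup.1 (hsup.ge ⟨hx, hs⟩)
    exact ⟨m, hm, by rw [map_add, LinearMap.mem_ker.1 hk.2, zero_add]⟩

lemma finiteDimensional_and_finrank_eq_of_disjoint_ker (f : E →ₗ[K] F) {M : Submodule K E}
    (hM : Disjoint M f.ker) [FiniteDimensional K (M.map f)] :
    FiniteDimensional K M ∧ finrank K M = finrank K (M.map f) := by
  have hinj : Function.Injective (f.domRestrict M) :=
    LinearMap.injective_domRestrict_iff.2 hM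
  let e := (LinearEquiv.ofInjective _ hinj).trans
    (LinearEquiv.ofEq _ _ (LinearMap.range_domRestrict M f))
  exact ⟨e.symm.finiteDimensional, e.finrank_eq⟩

lemma exists_le_disjoint_ker_finrank_eq (f : E →ₗ[K] F) {N : Submodule K E} {n : ℕ}
    (hn : n ≤ Module.rank K (N.map f)) :
    ∃ M ≤ N, Disjoint M f.ker ∧ FiniteDimensional K M ∧ finrank K M = n := by
  obtain ⟨v, hv⟩ := exists_linearIndependent_of_le_rank hn
  let S := (span K (Set.range v)).map (N.map f).subtype
  obtain ⟨M, hMN, hdisj, hMS⟩ := exists_le_disjoint_ker_map_eq f (map_subtype_le _ _ : S ≤ N.map f)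
  have : FiniteDimensional K (span K (Set.range v)) := .span_of_finite K (Set.finite_range v)
  have : FiniteDimensional K (M.map f) := hMS ▸ inferInstanceAs (FiniteDimensional K (map _ _))
  obtain ⟨hfin, hrank⟩ := finiteDimensional_and_finrank_eq_of_disjoint_ker f hdisj
  refine ⟨M, hMN, hdisj, hfin, ?_⟩
  rw [hrank, hMS, finrank_map_subtype_eq, finrank_span_eq_card hv, Fintype.card_fin]

end LinearAlgebra

lemma add_le_of_forall_natCast_le {a b c : ℕ∞} (h : ∀ n : ℕ, n ≤ b → a + n ≤ c) : a + b ≤ c := by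
  cases b with
  | top =>
    have hc : c = ⊤ := ENat.eq_top_iff_forall_ge.2 fun n ↦ le_add_self.trans (h n le_top)
    rw [hc]
    exact le_top
  | coe n => exact h n le_rfl

variable {Q : X →ₗ⋆[ℂ] X →ₗ[ℂ] ℂ} {V W N : Submodule ℂ X}

section Polar

lemma mem_qKer {x : X} : x ∈ qKer Q ↔ ∀ y, Q x y = 0 :=
  ⟨fun h y ↦ h y mem_top, fun h y _ ↦ h y⟩

lemma qPolar_anti (hNW : N ≤ W) : qPolar Q W ≤ qPolar Q N :=
  fun _ hx n hn ↦ hx n (hNW hn)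

lemma qPolar_sup (M N : Submodule ℂ X) : qPolar Q (M ⊔ N) = qPolar Q M ⊓ qPolar Q N := by
  ext x
  refine ⟨fun h ↦ ⟨fun m hm ↦ h m (mem_sup_left hm), fun n hn ↦ h n (mem_sup_right hn)⟩, ?_⟩
  rintro ⟨hM, hN⟩ _ hy
  obtain ⟨m, hm, n, hn, rfl⟩ := mem_sup.1 hy
  rw [map_add, hM m hm, hN n hn, add_zero]

lemma qPolar_qKer (hQ : Q.IsSymm) : qPolar Q (qKer Q) = ⊤ :=
  eq_top_iff.2 fun x _ _ hk ↦ hQ.eq_iff.1 (mem_qKer.1 hk x)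

lemma qPolar_eq_of_map_mkQ_eq (hQ : Q.IsSymm) {M N : Submodule ℂ X}
    (h : M.map (qKer Q).mkQ = N.map (qKer Q).mkQ) : qPolar Q M = qPolar Q N := by
  have h' := congrArg (comap (qKer Q).mkQ) h
  simp only [comap_map_mkQ] at h'
  have := congrArg (qPolar Q) h'
  simpa only [qPolar_sup, qPolar_qKer hQ, top_inf_eq] using this

lemma exists_ker_eq_qPolar (hQ : Q.IsSymm) (N : Submodule ℂ X) [FiniteDimensional ℂ N] :
    ∃ f : X →ₗ[ℂ] Fin (finrank ℂ N) → ℂ, f.ker = qPolar Q N := by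
  let y := finBasis ℂ N
  refine ⟨LinearMap.pi fun i ↦ Q (y i), le_antisymm (fun x hx n hn ↦ ?_) fun x hx ↦ ?_⟩
  · have hzero : (Q x).domRestrict N = 0 := y.ext fun i ↦ hQ.eq_iff.1 (congrFun hx i)
    exact LinearMap.congr_fun hzero ⟨n, hn⟩
  · exact funext fun i ↦ hQ.eq_iff.1 (hx _ (y i).2)

lemma finiteDimensional_map_mkQ_qPolar (hQ : Q.IsSymm) (V : Submodule ℂ X)
    [FiniteDimensional ℂ (X ⧸ V)] :
    FiniteDimensional ℂ ((qPolar Q V).map (qKer Q).mkQ) := by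
  obtain ⟨C, hVC⟩ := Submodule.exists_isCompl V
  have : FiniteDimensional ℂ C := (quotientEquivOfIsCompl V C hVC).finiteDimensional
  obtain ⟨f, hf⟩ := exists_ker_eq_qPolar hQ C
  have hinf : qPolar Q V ⊓ f.ker = qKer Q := by
    rw [hf, ← qPolar_sup, hVC.sup_eq_top, qKer]
  obtain ⟨M, hM, hker, hmap⟩ := exists_le_disjoint_ker_map_eq (qKer Q).mkQ
    (le_refl ((qPolar Q V).map _))
  have hdisj : Disjoint M f.ker := by
    rw [ker_mkQ, ← hinf, disjoint_iff, ← inf_assoc, inf_eq_left.2 hM] at hker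
    exact disjoint_iff.2 hker
  have := (finiteDimensional_and_finrank_eq_of_disjoint_ker f hdisj).1
  rw [← hmap]
  infer_instance

lemma exists_forall_apply_eq_of_disjoint_qKer (hQ : Q.IsSymm) {S : Submodule ℂ X}
    [FiniteDimensional ℂ S] (hS : Disjoint S (qKer Q)) (φ : Dual ℂ S) :
    ∃ x, ∀ s : S, Q x s = φ s := by
  -- The functionals `𝔔(x, ·)` on `S` form a subspace with coannihilator `S ⊓ ker 𝔔`.
  let f : X →ₗ⋆[ℂ] Dual ℂ S := S.dualRestrict.comp Q
  have hco : f.range.dualCoannihilator = ⊥ := by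
    refine eq_bot_iff.2 fun s hs ↦ ?_
    have hker : (s : X) ∈ qKer Q := mem_qKer.2 fun x ↦
      hQ.eq_iff.1 ((mem_dualCoannihilator s).1 hs (f x) (LinearMap.mem_range_self f x))
    exact Subtype.ext (disjoint_def.1 hS s s.2 hker)
  have htop : f.range = ⊤ := by
    rw [← Subspace.dualCoannihilator_dualAnnihilator_eq (W := f.range), hco, dualAnnihilator_bot]
  obtain ⟨x, hx⟩ := htop.ge (mem_top (x := φ))
  exact ⟨x, LinearMap.congr_fun hx⟩

end Polar

section NegDef

/-- `𝔔` is negative definite on `W`; stated through the real part of `𝔔(x, x)`, as in `negIdx`. -/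
def IsNegDefOn (Q : X →ₗ⋆[ℂ] X →ₗ[ℂ] ℂ) (W : Submodule ℂ X) : Prop :=
  ∀ x ∈ W, x ≠ 0 → (Q x x).re < 0

lemma IsNegDefOn.mono (hW : IsNegDefOn Q W) (hNW : N ≤ W) : IsNegDefOn Q N :=
  fun x hx ↦ hW x (hNW hx)

lemma IsNegDefOn.disjoint_qPolar (hW : IsNegDefOn Q W) : Disjoint W (qPolar Q W) := by
  refine disjoint_def.2 fun x hx hx' ↦ by_contra fun hne ↦ ?_
  simpa [hx' x hx] using hW x hx hne

lemma IsNegDefOn.disjoint_sup_qKer (hW : IsNegDefOn Q W) (hNW : N ≤ qPolar Q W)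
    (hN : Disjoint N (qKer Q)) : Disjoint (W ⊔ N) (qKer Q) :=
  hN.disjoint_sup_left_of_disjoint_sup_right <|
    hW.disjoint_qPolar.mono_right (sup_le hNW (qPolar_anti le_top))

lemma IsNegDefOn.sup (hQ : Q.IsSymm) (hW : IsNegDefOn Q W) (hN : IsNegDefOn Q N)
    (hNW : N ≤ qPolar Q W) : IsNegDefOn Q (W ⊔ N) := by
  intro x hx hne
  obtain ⟨w, hw, n, hn, rfl⟩ := mem_sup.1 hx
  have hnw : Q n w = 0 := hNW hn w hw
  have hsum : (Q (w + n) (w + n)).re = (Q w w).re + (Q n n).re := by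
    simp [hnw, hQ.eq_iff.1 hnw]
  rw [hsum]
  rcases eq_or_ne w 0 with rfl | hw0
  · simpa using hN n hn (by simpa using hne)
  rcases eq_or_ne n 0 with rfl | hn0
  · simpa using hW w hw hw0
  · exact add_neg (hW w hw hw0) (hN n hn hn0)

variable {ι : Type*} [DecidableEq ι] {z : ι → X}

lemma linearIndependent_of_gram_eq_neg_one (hz : ∀ i j, Q (z i) (z j) = if i = j then -1 else 0) :
    LinearIndependent ℂ z :=
  LinearMap.linearIndependent_of_isOrthoᵢ (B := Q)
    (LinearMap.isOrthoᵢ_def.2 fun i j hij ↦ by rw [hz, if_neg hij]) fun i ↦ by simp [hz]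

lemma isNegDefOn_span_of_gram_eq_neg_one [Finite ι]
    (hz : ∀ i j, Q (z i) (z j) = if i = j then -1 else 0) :
    IsNegDefOn Q (span ℂ (Set.range z)) := by
  have := Fintype.ofFinite ι
  intro x hx hne
  obtain ⟨c, rfl⟩ := (mem_span_range_iff_exists_fun ℂ).1 hx
  have hval : Q (∑ i, c i • z i) (∑ i, c i • z i) = ((-∑ i, Complex.normSq (c i) : ℝ) : ℂ) := by
    simp [hz, Complex.normSq_eq_conj_mul_self, mul_comm]
  obtain ⟨i, -, hi⟩ := Finset.exists_ne_zero_of_sum_ne_zero hne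
  rw [hval, Complex.ofReal_re, neg_lt_zero]
  exact Finset.sum_pos' (fun _ _ ↦ Complex.normSq_nonneg _)
    ⟨i, Finset.mem_univ i, Complex.normSq_pos.2 (left_ne_zero_of_smul hi)⟩

end NegDef

section Hyperbolic

variable {ι : Type*} [DecidableEq ι]

lemma exists_dual_family_mem_qPolar (hQ : Q.IsSymm) [FiniteDimensional ℂ W] [FiniteDimensional ℂ N]
    (hWN : Disjoint W N) (hker : Disjoint (W ⊔ N) (qKer Q)) (y : Basis ι ℂ N) :
    ∃ e : ι → X, (∀ i, e i ∈ qPolar Q W) ∧ ∀ i j, Q (e i) (y j) = if i = j then 1 else 0 := by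
  obtain ⟨C, hWC, hCN⟩ := hWN.exists_isCompl
  let p : X →ₗ[ℂ] N := N.projectionOnto C hCN.symm
  have hpW (w) (hw : w ∈ W) : p w = 0 := projectionOnto_apply_of_mem_right _ (hWC hw)
  have hpN (n : N) : p n = n := projectionOnto_apply_left _ n
  choose e he using fun i ↦ exists_forall_apply_eq_of_disjoint_qKer hQ hker
    (y.coord i ∘ₗ p ∘ₗ (W ⊔ N).subtype)
  refine ⟨e, fun i w hw ↦ ?_, fun i j ↦ ?_⟩
  · simpa [hpW w hw] using he i ⟨w, mem_sup_left hw⟩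
  · simpa [hpN, Finsupp.single_apply, eq_comm] using he i ⟨y j, mem_sup_right (y j).2⟩

lemma exists_gram_sub_eq_neg_one [Finite ι] (hQ : Q.IsSymm) (hN : N ≤ qPolar Q N)
    {e : ι → X} {y : ι → N} (he : ∀ i j, Q (e i) (y j) = if i = j then 1 else 0) :
    ∃ u : ι → N, ∀ i j, Q (e i - u i) (e j - u j) = if i = j then -1 else 0 := by
  have := Fintype.ofFinite ι
  -- Since `𝔔 (u i) (u j) = 0`, it suffices that `𝔔 (e i) (u j) + 𝔔 (u i) (e j)` be
  -- `𝔔 (e i) (e j) + δᵢⱼ`; both summands are taken to be half of it.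
  let a (i j : ι) : ℂ := (Q (e i) (e j) + if i = j then 1 else 0) / 2
  let u (j : ι) : N := ∑ k, a k j • y k
  have ha (i j) : star (a i j) = a j i := by
    simp [a, hQ.eq, apply_ite, eq_comm]
  have heu (i j) : Q (e i) (u j) = a i j := by simp [u, he]
  have hue (i j) : Q (u i) (e j) = a i j := by
    rw [← hQ.eq, heu]
    exact ha j i
  refine ⟨u, fun i j ↦ ?_⟩
  have huu : Q (u i) (u j) = 0 := hN (u i).2 _ (u j).2
  simp only [map_sub, LinearMap.sub_apply, heu, hue, huu, a]
  split_ifs <;> ring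

end Hyperbolic

section MorseIndex

lemma finrank_le_negIdx [FiniteDimensional ℂ W] (hWV : W ≤ V) (hW : IsNegDefOn Q W) :
    (finrank ℂ W : ℕ∞) ≤ negIdx Q V :=
  le_sSup ⟨W, hWV, inferInstance, hW, rfl⟩

lemma negIdx_add_le {a b : ℕ∞} (h : ∀ W ≤ V, FiniteDimensional ℂ W → IsNegDefOn Q W →
    finrank ℂ W + a ≤ b) : negIdx Q V + a ≤ b := by
  have hbot : IsNegDefOn Q ⊥ := fun x hx hne ↦ absurd ((mem_bot ℂ).1 hx) hne
  rw [negIdx, ENat.sSup_add]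
  · refine iSup₂_le ?_
    rintro _ ⟨W, hWV, hfin, hW, rfl⟩
    exact h W hWV hfin hW
  · exact ⟨_, ⊥, bot_le, inferInstance, hbot, rfl⟩

lemma finrank_add_finrank_le_negIdx (hQ : Q.IsSymm) [FiniteDimensional ℂ W] [FiniteDimensional ℂ N]
    (hW : IsNegDefOn Q W) (hNW : N ≤ qPolar Q W) (hNN : N ≤ qPolar Q N)
    (hN : Disjoint N (qKer Q)) : ((finrank ℂ W + finrank ℂ N : ℕ) : ℕ∞) ≤ negIdx Q ⊤ := by
  let y := finBasis ℂ N
  obtain ⟨e, heW, hey⟩ := exists_dual_family_mem_qPolar hQ (hW.disjoint_qPolar.mono_right hNW)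
    (hW.disjoint_sup_qKer hNW hN) y
  obtain ⟨u, hgram⟩ := exists_gram_sub_eq_neg_one hQ hNN hey
  let P := span ℂ (Set.range fun i ↦ e i - (u i : X))
  have hPW : P ≤ qPolar Q W := span_le.2 <| Set.range_subset_iff.2 fun i ↦
    sub_mem (heW i) (hNW (u i).2)
  have hPfin : FiniteDimensional ℂ P := .span_of_finite ℂ (Set.finite_range _)
  have hPrank : finrank ℂ P = finrank ℂ N := by
    rw [finrank_span_eq_card (linearIndependent_of_gram_eq_neg_one hgram), Fintype.card_fin]
  have hrank : finrank ℂ ↥(W ⊔ P) = finrank ℂ W + finrank ℂ N := by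
    rw [← hPrank, ← finrank_sup_add_finrank_inf_eq, (hW.disjoint_qPolar.mono_right hPW).eq_bot,
      finrank_bot, add_zero]
  rw [← hrank]
  exact finrank_le_negIdx le_top (hW.sup hQ (isNegDefOn_span_of_gram_eq_neg_one hgram) hPW)

theorem negIdx_add_toENat_rank_qPolar_inf_self_le (hQ : Q.IsSymm) (V : Submodule ℂ X) :
    negIdx Q V + Cardinal.toENat (Module.rank ℂ ((qPolar Q V ⊓ V).map (qKer Q).mkQ))
      ≤ negIdx Q ⊤ := by
  refine negIdx_add_le fun W hWV _ hW ↦ add_le_of_forall_natCast_le fun n hn ↦ ?_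
  obtain ⟨N, hN, hker, _, rfl⟩ :=
    exists_le_disjoint_ker_finrank_eq _ (Cardinal.natCast_le_toENat.1 hn)
  rw [ker_mkQ] at hker
  exact_mod_cast finrank_add_finrank_le_negIdx hQ hW
    (hN.trans (inf_le_left.trans (qPolar_anti hWV)))
    (hN.trans (inf_le_left.trans (qPolar_anti (hN.trans inf_le_right)))) hker

lemma negIdx_le_negIdx_inf_ker_add_finrank {Y : Type*} [AddCommGroup Y] [Module ℂ Y]
    [FiniteDimensional ℂ Y] (V : Submodule ℂ X) (f : X →ₗ[ℂ] Y) :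
    negIdx Q V ≤ negIdx Q (V ⊓ f.ker) + finrank ℂ Y := by
  refine sSup_le ?_
  rintro _ ⟨W, hWV, _, hW, rfl⟩
  have hker : finrank ℂ (f.domRestrict W).ker = finrank ℂ ↥(W ⊓ f.ker) := by
    rw [LinearMap.ker_domRestrict, ← map_comap_subtype, finrank_map_subtype_eq]
  have hrank : finrank ℂ W ≤ finrank ℂ ↥(W ⊓ f.ker) + finrank ℂ Y := by
    rw [← (f.domRestrict W).finrank_range_add_finrank_ker, hker, add_comm]
    gcongr
    exact finrank_le _
  calc (finrank ℂ W : ℕ∞) ≤ finrank ℂ ↥(W ⊓ f.ker) + finrank ℂ Y := mod_cast hrank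
    _ ≤ negIdx Q (V ⊓ f.ker) + finrank ℂ Y := by
      gcongr
      exact finrank_le_negIdx (inf_le_inf_right _ hWV) (IsNegDefOn.mono hW inf_le_left)

lemma negIdx_le_negIdx_inf_qPolar_add_finrank (hQ : Q.IsSymm) (V N : Submodule ℂ X)
    [FiniteDimensional ℂ N] : negIdx Q V ≤ negIdx Q (V ⊓ qPolar Q N) + finrank ℂ N := by
  obtain ⟨f, hf⟩ := exists_ker_eq_qPolar hQ N
  simpa [hf] using negIdx_le_negIdx_inf_ker_add_finrank V f

theorem negIdx_le_negIdx_inf_qPolar_add_toENat_rank (hQ : Q.IsSymm) (V N : Submodule ℂ X) :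
    negIdx Q V ≤ negIdx Q (V ⊓ qPolar Q N)
      + Cardinal.toENat (Module.rank ℂ (N.map (qKer Q).mkQ)) := by
  by_cases hfin : FiniteDimensional ℂ (N.map (qKer Q).mkQ)
  · obtain ⟨M, -, hker, hM⟩ := exists_le_disjoint_ker_map_eq (qKer Q).mkQ (le_refl (N.map _))
    have : FiniteDimensional ℂ (M.map (qKer Q).mkQ) := hM ▸ hfin
    obtain ⟨_, hrank⟩ := finiteDimensional_and_finrank_eq_of_disjoint_ker _ hker
    rw [← qPolar_eq_of_map_mkQ_eq hQ hM, ← hM, ← finrank_eq_rank, Cardinal.toENat_nat, ← hrank]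
    exact negIdx_le_negIdx_inf_qPolar_add_finrank hQ V M
  · rw [Cardinal.toENat_eq_top.2 (not_lt.1 (rank_lt_aleph0_iff.not.2 hfin)), add_top]
    exact le_top

theorem morse_index_relative_isotropic_general (hQ : Q.IsSymm)
    (hVQQ : qPolar Q (qPolar Q V) = V) (hsub : qPolar Q V ≤ V) :
    negIdx Q ⊤ = negIdx Q V
      + Cardinal.toENat (Module.rank ℂ ((qPolar Q V).map (qKer Q).mkQ)) := by
  apply le_antisymm
  · simpa only [top_inf_eq, hVQQ] using
      negIdx_le_negIdx_inf_qPolar_add_toENat_rank hQ ⊤ (qPolar Q V)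
  · have hinf : qPolar Q V ⊓ V = qPolar Q V := inf_eq_left.2 hsub
    rw [← hinf]
    exact negIdx_add_toENat_rank_qPolar_inf_self_le hQ V

end MorseIndex

/-- If `V^{𝔔𝔔} = V`, `dim X/V < ∞` and `V^𝔔 ⊆ V`, then
`m⁻(𝔔) − m⁻(𝔔|_V) = dim(V^𝔔/ker 𝔔)`. -/
theorem morse_index_relative_isotropic
    (Q : X →ₗ⋆[ℂ] X →ₗ[ℂ] ℂ)
    (hQ : ∀ x y, (starRingEnd ℂ) (Q x y) = Q y x)
    (V : Submodule ℂ X) (hcodim : Module.Finite ℂ (X ⧸ V))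
    (hVQQ : qPolar Q (qPolar Q V) = V) (hsub : qPolar Q V ≤ V)
    (hfin : negIdx Q V ≠ ⊤) :
    negIdx Q ⊤ = negIdx Q V
      + (Module.finrank ℂ ↥((qPolar Q V).map (qKer Q).mkQ) : ℕ∞) := by
  have := finiteDimensional_map_mkQ_qPolar ⟨hQ⟩ V
  rw [morse_index_relative_isotropic_general ⟨hQ⟩ hVQQ hsub, ← finrank_eq_rank, Cardinal.toENat_nat]
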